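/- arXiv:1004.4253 — 2 statements merged into one kernel-verified Lean document; each statement's English description precedes it below -/
import Mathlib

section
/- The absolute value map on the right-angled Artin group A_Γ is well-defined: if v_1^{e_1} ⋯ v_n^{e_n} and u_1^{f_1} ⋯ u_n^{f_n} (with v_i, u_i ∈ V and e_i, f_i ∈ {+1, −1}) are two geodesic words representing the same element g ∈ A_Γ (so n = |g|), then the positive words v_1 v_2 ⋯ v_n and u_1 u_2 ⋯ u_n represent the same element of A_Γ. -/
/-- The commutator relators of the right-angled Artin group on the graph `Γ`. -/
def raagRels {V : Type*} (Γ : SimpleGraph V) : Set (FreeGroup V) :=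
  {r | ∃ u v : V, Γ.Adj u v ∧
    r = FreeGroup.of u * FreeGroup.of v * (FreeGroup.of u)⁻¹ * (FreeGroup.of v)⁻¹}

/-- The right-angled Artin group `A_Γ` on the graph `Γ`. -/
abbrev RAAG {V : Type*} (Γ : SimpleGraph V) : Type _ :=
  PresentedGroup (raagRels Γ)

/-- The generator of `A_Γ` corresponding to the vertex `v`. -/
def RAAG.gen {V : Type*} (Γ : SimpleGraph V) (v : V) : RAAG Γ :=
  PresentedGroup.of v

/-- Word length of `g` with respect to a generating set `X`: the least `n` such that
`g` is a product of `n` elements of `X ∪ X⁻¹`. -/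
noncomputable def wlen {G : Type*} [Group G] (X : Set G) (g : G) : ℕ :=
  sInf {n | ∃ l : List G, l.length = n ∧ (∀ x ∈ l, x ∈ X ∨ x⁻¹ ∈ X) ∧ l.prod = g}

/-- Word length in `A_Γ` with respect to the vertex generating set. -/
noncomputable def RAAG.wordLength {V : Type*} (Γ : SimpleGraph V) (g : RAAG Γ) : ℕ :=
  wlen (Set.range (RAAG.gen Γ)) g

/-- The letter `v^e` (with `e = true` for `v` and `e = false` for `v⁻¹`). -/
def RAAG.letter {V : Type*} (Γ : SimpleGraph V) (v : V) (e : Bool) : RAAG Γ :=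
  if e then RAAG.gen Γ v else (RAAG.gen Γ v)⁻¹

/-!
Words in `V ∪ V⁻¹` modulo swaps of neighbouring letters with adjacent vertices are Mazurkiewicz
traces. The group `A_Γ` acts on the reduced traces by left multiplication followed by cancellation,
and following the empty trace along a geodesic word `w` never cancels anything, since a cancellation
would produce a shorter word. Hence the image of the empty trace under `g` is the trace of *every*
geodesic word for `g`, so any two geodesic words for `g` differ by swaps of commuting letters, and
such swaps survive forgetting the signs.
-/

section TraceEquiv

variable {α : Type*} {I : SimpleGraph α} {a b c : α} {w w' x y : List α}

/-- Equality of words up to swaps of neighbouring letters that are adjacent in the independence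
graph `I`; the analogue of `List.Perm` with only some transpositions allowed. -/
inductive TraceEquiv (I : SimpleGraph α) : List α → List α → Prop
  | refl (w : List α) : TraceEquiv I w w
  | cons (a : α) {w w' : List α} : TraceEquiv I w w' → TraceEquiv I (a :: w) (a :: w')
  | swap {a b : α} (h : I.Adj a b) (w : List α) : TraceEquiv I (a :: b :: w) (b :: a :: w)
  | trans {u w x : List α} : TraceEquiv I u w → TraceEquiv I w x → TraceEquiv I u x

/-- `Extracts I c w x` says that `x` is `w` with one occurrence of `c` deleted, where all letters
before that occurrence are independent of `c`. -/
inductive Extracts (I : SimpleGraph α) (c : α) : List α → List α → Prop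
  | head (w : List α) : Extracts I c (c :: w) w
  | cons {a : α} {w x : List α} : I.Adj a c → Extracts I c w x → Extracts I c (a :: w) (a :: x)

theorem Extracts.traceEquiv (h : Extracts I c w x) : TraceEquiv I w (c :: x) := by
  induction h with
  | head w => exact .refl _
  | cons hadj _ ih => exact (ih.cons _).trans (.swap hadj _)

namespace TraceEquiv

theorem symm (h : TraceEquiv I w w') : TraceEquiv I w' w := by
  induction h with
  | refl w => exact .refl w
  | cons a _ ih => exact ih.cons a
  | swap hadj w => exact .swap hadj.symm w
  | trans _ _ ih₁ ih₂ => exact ih₂.trans ih₁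

theorem perm (h : TraceEquiv I w w') : w.Perm w' := by
  induction h with
  | refl w => exact .refl w
  | cons a _ ih => exact ih.cons a
  | swap _ w => exact .swap _ _ w
  | trans _ _ ih₁ ih₂ => exact ih₁.trans ih₂

theorem prod_map_eq {M : Type*} [Monoid M] {f : α → M}
    (hf : ∀ ⦃a b⦄, I.Adj a b → Commute (f a) (f b)) (h : TraceEquiv I w w') :
    (w.map f).prod = (w'.map f).prod := by
  induction h with
  | refl w => rfl
  | cons a _ ih => simp only [List.map_cons, List.prod_cons, ih]
  | swap hadj w => simp only [List.map_cons, List.prod_cons, ← mul_assoc, (hf hadj).eq]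
  | trans _ _ ih₁ ih₂ => exact ih₁.trans ih₂

theorem exists_extracts (h : TraceEquiv I w w') (hx : Extracts I c w x) :
    ∃ y, Extracts I c w' y ∧ TraceEquiv I x y := by
  induction h generalizing x with
  | refl w => exact ⟨x, hx, .refl x⟩
  | cons a h ih =>
    cases hx with
    | head => exact ⟨_, .head _, h⟩
    | cons hac hx =>
      obtain ⟨y, hy, hxy⟩ := ih hx
      exact ⟨a :: y, hy.cons hac, hxy.cons a⟩
  | swap hab w =>
    cases hx with
    | head => exact ⟨_, .cons hab.symm (.head w), .refl _⟩
    | cons hac hx =>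
      cases hx with
      | head => exact ⟨_, .head _, .refl _⟩
      | cons hbc hx => exact ⟨_, .cons hbc (.cons hac hx), .swap hab _⟩
  | trans _ _ ih₁ ih₂ =>
    obtain ⟨y, hy, hxy⟩ := ih₁ hx
    obtain ⟨z, hz, hyz⟩ := ih₂ hy
    exact ⟨z, hz, hxy.trans hyz⟩

theorem of_cons (h : TraceEquiv I (c :: x) (c :: y)) : TraceEquiv I x y := by
  obtain ⟨z, hz, hxz⟩ := h.exists_extracts (.head x)
  cases hz with
  | head => exact hxz
  | cons hcc => exact (I.irrefl hcc).elim

/-- Levi's lemma for traces. -/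
theorem exists_of_cons_of_ne (hab : a ≠ b) (h : TraceEquiv I (a :: x) (b :: y)) :
    I.Adj a b ∧ ∃ z, TraceEquiv I x (b :: z) ∧ TraceEquiv I y (a :: z) := by
  obtain ⟨z, hz, hxz⟩ := h.exists_extracts (.head x)
  cases hz with
  | head => exact (hab rfl).elim
  | cons hba hyz => exact ⟨hba.symm, _, hxz, hyz.traceEquiv⟩

end TraceEquiv

end TraceEquiv

/-- Trace equivalence as a setoid on words. -/
def traceSetoid {α : Type*} (I : SimpleGraph α) : Setoid (List α) where
  r := TraceEquiv I
  iseqv := ⟨.refl, .symm, .trans⟩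

/-- Mazurkiewicz traces: words over `α` in which letters adjacent in `I` commute. -/
def MazurkiewiczTrace {α : Type*} (I : SimpleGraph α) : Type _ :=
  Quotient (traceSetoid I)

namespace MazurkiewiczTrace

variable {α : Type*} {I : SimpleGraph α} {a b : α} {s t : MazurkiewiczTrace I}

/-- The trace represented by a word. -/
def mk (I : SimpleGraph α) (w : List α) : MazurkiewiczTrace I :=
  Quotient.mk (traceSetoid I) w

theorem mk_eq_mk {w w' : List α} : mk I w = mk I w' ↔ TraceEquiv I w w' :=
  Quotient.eq

theorem mk_surjective : Function.Surjective (mk I) :=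
  Quotient.mk_surjective

/-- The trace obtained by multiplying by a letter on the left. -/
def cons (a : α) : MazurkiewiczTrace I → MazurkiewiczTrace I :=
  Quotient.map (a :: ·) fun _ _ h => TraceEquiv.cons a h

theorem cons_mk (a : α) (w : List α) : cons a (mk I w) = mk I (a :: w) :=
  rfl

theorem cons_ne_mk_nil : cons a t ≠ mk I [] := by
  obtain ⟨w, rfl⟩ := mk_surjective t
  rw [cons_mk, Ne, mk_eq_mk]
  exact fun h => List.cons_ne_nil a w h.perm.eq_nil

theorem cons_injective (a : α) : Function.Injective (cons (I := I) a) := by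
  intro s t h
  obtain ⟨x, rfl⟩ := mk_surjective s
  obtain ⟨y, rfl⟩ := mk_surjective t
  exact mk_eq_mk.2 (mk_eq_mk.1 h).of_cons

theorem cons_comm (hab : I.Adj a b) (t : MazurkiewiczTrace I) :
    cons a (cons b t) = cons b (cons a t) := by
  obtain ⟨w, rfl⟩ := mk_surjective t
  exact mk_eq_mk.2 (.swap hab w)

theorem exists_of_cons_eq_cons (hab : a ≠ b) (h : cons a s = cons b t) :
    I.Adj a b ∧ ∃ r, s = cons b r ∧ t = cons a r := by
  obtain ⟨x, rfl⟩ := mk_surjective s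
  obtain ⟨y, rfl⟩ := mk_surjective t
  obtain ⟨hadj, z, hx, hy⟩ := (mk_eq_mk.1 h).exists_of_cons_of_ne hab
  exact ⟨hadj, mk I z, mk_eq_mk.2 hx, mk_eq_mk.2 hy⟩

theorem cons_mem_range_cons_iff (hab : I.Adj a b) :
    cons b t ∈ Set.range (cons a) ↔ t ∈ Set.range (cons a) := by
  constructor
  · rintro ⟨s, hs⟩
    obtain ⟨-, r, -, rfl⟩ := exists_of_cons_eq_cons hab.ne hs
    exact ⟨r, rfl⟩
  · rintro ⟨s, rfl⟩
    exact ⟨cons b s, cons_comm hab s⟩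

end MazurkiewiczTrace

theorem wlen_prod_le_length {G : Type*} [Group G] {X : Set G} {l : List G}
    (hl : ∀ x ∈ l, x ∈ X ∨ x⁻¹ ∈ X) : wlen X l.prod ≤ l.length :=
  Nat.sInf_le ⟨l, rfl, hl, rfl⟩

namespace RAAG

variable {V : Type*} {Γ : SimpleGraph V}

/-- The formal inverse of a signed letter. -/
def invLetter (a : V × Bool) : V × Bool :=
  (a.1, !a.2)

theorem invLetter_invLetter (a : V × Bool) : invLetter (invLetter a) = a :=
  Prod.ext rfl (Bool.not_not a.2)

/-- The independence graph on signed letters: two letters commute when their vertices are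
adjacent. -/
abbrev letterGraph (Γ : SimpleGraph V) : SimpleGraph (V × Bool) :=
  Γ.comap Prod.fst

variable {a b : V × Bool} {t : MazurkiewiczTrace (letterGraph Γ)}

theorem letterGraph_adj_invLetter_left (hab : (letterGraph Γ).Adj a b) :
    (letterGraph Γ).Adj (invLetter a) b :=
  hab

open MazurkiewiczTrace

/-- Reduced traces of signed letters: those built up from the empty trace by prepending letters
that do not cancel. -/
inductive Reduced : MazurkiewiczTrace (letterGraph Γ) → Prop
  | nil : Reduced (mk _ [])
  | cons_of_notMem {a : V × Bool} {t : MazurkiewiczTrace (letterGraph Γ)} :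
    Reduced t → t ∉ Set.range (cons (invLetter a)) → Reduced (cons a t)

theorem Reduced.of_cons (h : Reduced (cons a t)) :
    Reduced t ∧ t ∉ Set.range (cons (invLetter a)) := by
  generalize hs : cons a t = s at h
  induction h generalizing a t with
  | nil => exact (cons_ne_mk_nil hs).elim
  | @cons_of_notMem b s hs_red hb ih =>
    rcases eq_or_ne a b with rfl | hab
    · obtain rfl := cons_injective a hs
      exact ⟨hs_red, hb⟩
    · obtain ⟨hadj, r, rfl, rfl⟩ := exists_of_cons_eq_cons hab hs
      obtain ⟨hr, ha⟩ := ih rfl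
      rw [cons_mem_range_cons_iff (letterGraph_adj_invLetter_left hadj.symm)] at hb
      rw [cons_mem_range_cons_iff (letterGraph_adj_invLetter_left hadj)]
      exact ⟨hr.cons_of_notMem hb, ha⟩

/-- Left multiplication by a letter followed by cancellation: `invLetter a · t ↦ t`, and
`t ↦ a · t` if `t` does not start with `invLetter a`. -/
noncomputable def mulLetter (a : V × Bool) :
    MazurkiewiczTrace (letterGraph Γ) → MazurkiewiczTrace (letterGraph Γ) :=
  Function.extend (cons (invLetter a)) id (cons a)

theorem mulLetter_cons_invLetter (a : V × Bool) (t : MazurkiewiczTrace (letterGraph Γ)) :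
    mulLetter a (cons (invLetter a) t) = t :=
  (cons_injective (invLetter a)).extend_apply id _ t

theorem mulLetter_of_notMem (h : t ∉ Set.range (cons (invLetter a))) : mulLetter a t = cons a t :=
  Function.extend_apply' _ _ t h

theorem reduced_mulLetter (ht : Reduced t) (a : V × Bool) : Reduced (mulLetter a t) := by
  by_cases ha : t ∈ Set.range (cons (invLetter a))
  · obtain ⟨s, rfl⟩ := ha
    rw [mulLetter_cons_invLetter]
    exact ht.of_cons.1
  · rw [mulLetter_of_notMem ha]
    exact ht.cons_of_notMem ha

theorem mulLetter_invLetter_mulLetter (ht : Reduced t) (a : V × Bool) :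
    mulLetter (invLetter a) (mulLetter a t) = t := by
  by_cases ha : t ∈ Set.range (cons (invLetter a))
  · obtain ⟨s, rfl⟩ := ha
    rw [mulLetter_cons_invLetter, mulLetter_of_notMem ht.of_cons.2]
  · simpa only [mulLetter_of_notMem ha, invLetter_invLetter] using
      mulLetter_cons_invLetter (invLetter a) t

theorem mulLetter_cons_of_adj (hab : (letterGraph Γ).Adj a b)
    (t : MazurkiewiczTrace (letterGraph Γ)) :
    mulLetter a (cons b t) = cons b (mulLetter a t) := by
  have hab' := letterGraph_adj_invLetter_left hab
  by_cases ha : t ∈ Set.range (cons (invLetter a))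
  · obtain ⟨s, rfl⟩ := ha
    rw [← cons_comm hab', mulLetter_cons_invLetter, mulLetter_cons_invLetter]
  · rw [mulLetter_of_notMem ha, mulLetter_of_notMem ((cons_mem_range_cons_iff hab').not.2 ha),
      cons_comm hab]

theorem mulLetter_mem_range_cons_iff (hab : (letterGraph Γ).Adj a b) :
    mulLetter a t ∈ Set.range (cons b) ↔ t ∈ Set.range (cons b) := by
  by_cases ha : t ∈ Set.range (cons (invLetter a))
  · obtain ⟨s, rfl⟩ := ha
    rw [mulLetter_cons_invLetter, cons_mem_range_cons_iff (letterGraph_adj_invLetter_left hab).symm]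
  · rw [mulLetter_of_notMem ha, cons_mem_range_cons_iff hab.symm]

theorem mulLetter_comm (hab : (letterGraph Γ).Adj a b)
    (t : MazurkiewiczTrace (letterGraph Γ)) :
    mulLetter a (mulLetter b t) = mulLetter b (mulLetter a t) := by
  have hab' : (letterGraph Γ).Adj a (invLetter b) := (letterGraph_adj_invLetter_left hab.symm).symm
  by_cases hb : t ∈ Set.range (cons (invLetter b))
  · obtain ⟨s, rfl⟩ := hb
    rw [mulLetter_cons_invLetter, mulLetter_cons_of_adj hab', mulLetter_cons_invLetter]
  · rw [mulLetter_of_notMem hb, mulLetter_cons_of_adj hab,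
      mulLetter_of_notMem ((mulLetter_mem_range_cons_iff hab').not.2 hb)]

/-- The permutation of the reduced traces by which the generator `v` acts. -/
noncomputable def genPerm (Γ : SimpleGraph V) (v : V) :
    Equiv.Perm {t : MazurkiewiczTrace (letterGraph Γ) // Reduced t} where
  toFun t := ⟨mulLetter (v, true) t.1, reduced_mulLetter t.2 _⟩
  invFun t := ⟨mulLetter (v, false) t.1, reduced_mulLetter t.2 _⟩
  left_inv t := Subtype.ext (mulLetter_invLetter_mulLetter t.2 (v, true))
  right_inv t := Subtype.ext (mulLetter_invLetter_mulLetter t.2 (v, false))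

theorem genPerm_commute {u v : V} (huv : Γ.Adj u v) : Commute (genPerm Γ u) (genPerm Γ v) :=
  Equiv.ext fun t => Subtype.ext (mulLetter_comm (a := (u, true)) (b := (v, true)) huv t.1)

theorem lift_genPerm_eq_one (r : FreeGroup V) (hr : r ∈ raagRels Γ) :
    FreeGroup.lift (genPerm Γ) r = 1 := by
  obtain ⟨u, v, huv, rfl⟩ := hr
  simp [(genPerm_commute huv).eq]

/-- The action of `A_Γ` on the reduced traces by left multiplication. -/
noncomputable def reducedAction (Γ : SimpleGraph V) :
    RAAG Γ →* Equiv.Perm {t : MazurkiewiczTrace (letterGraph Γ) // Reduced t} :=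
  PresentedGroup.toGroup lift_genPerm_eq_one

theorem reducedAction_letter (a : V × Bool)
    (t : {t : MazurkiewiczTrace (letterGraph Γ) // Reduced t}) :
    (reducedAction Γ (letter Γ a.1 a.2) t : MazurkiewiczTrace (letterGraph Γ)) =
      mulLetter a t := by
  have hgen (v : V) : reducedAction Γ (gen Γ v) = genPerm Γ v := PresentedGroup.toGroup.of _
  obtain ⟨v, _ | _⟩ := a
  · simp only [letter, Bool.false_eq_true, if_false, map_inv, hgen]
    rfl
  · simp only [letter, if_true, hgen]
    rfl

/-- The reduced trace of a group element: the image of the empty trace under its action. -/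
noncomputable def normalForm (g : RAAG Γ) : MazurkiewiczTrace (letterGraph Γ) :=
  reducedAction Γ g ⟨mk _ [], .nil⟩

theorem normalForm_one : normalForm (1 : RAAG Γ) = mk _ [] := by
  rw [normalForm, map_one, Equiv.Perm.one_apply]

theorem normalForm_letter_mul (a : V × Bool) (g : RAAG Γ) :
    normalForm (letter Γ a.1 a.2 * g) = mulLetter a (normalForm g) := by
  rw [normalForm, map_mul, Equiv.Perm.mul_apply, reducedAction_letter, normalForm]

theorem gen_commute {u v : V} (huv : Γ.Adj u v) : Commute (gen Γ u) (gen Γ v) := by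
  have hrel := PresentedGroup.one_of_mem (rels := raagRels Γ) ⟨u, v, huv, rfl⟩
  simp only [map_mul, map_inv] at hrel
  exact mul_inv_eq_iff_eq_mul.1 (mul_inv_eq_one.1 hrel)

theorem letter_commute (hab : (letterGraph Γ).Adj a b) :
    Commute (letter Γ a.1 a.2) (letter Γ b.1 b.2) := by
  have hgen : Commute (gen Γ a.1) (gen Γ b.1) := gen_commute hab
  unfold letter
  split_ifs <;> simpa using hgen

theorem letter_mul_letter_invLetter (Γ : SimpleGraph V) (a : V × Bool) :
    letter Γ a.1 a.2 * letter Γ (invLetter a).1 (invLetter a).2 = 1 := by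
  obtain ⟨v, _ | _⟩ := a <;> simp [letter, invLetter]

theorem letter_mem_or_inv_mem (Γ : SimpleGraph V) (v : V) (e : Bool) :
    letter Γ v e ∈ Set.range (gen Γ) ∨ (letter Γ v e)⁻¹ ∈ Set.range (gen Γ) := by
  cases e <;> simp [letter]

/-- The element of `A_Γ` represented by a word in signed letters. -/
def wordProd (Γ : SimpleGraph V) (w : List (V × Bool)) : RAAG Γ :=
  (w.map fun p => letter Γ p.1 p.2).prod

theorem wordProd_cons (Γ : SimpleGraph V) (a : V × Bool) (w : List (V × Bool)) :
    wordProd Γ (a :: w) = letter Γ a.1 a.2 * wordProd Γ w :=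
  List.prod_cons

variable {w w₁ w₂ : List (V × Bool)}

theorem wordProd_eq_of_traceEquiv (h : TraceEquiv (letterGraph Γ) w₁ w₂) :
    wordProd Γ w₁ = wordProd Γ w₂ :=
  h.prod_map_eq fun _ _ => letter_commute

theorem wordLength_wordProd_le_length (Γ : SimpleGraph V) (w : List (V × Bool)) :
    wordLength Γ (wordProd Γ w) ≤ w.length := by
  refine (wlen_prod_le_length fun x hx => ?_).trans_eq (List.length_map _)
  obtain ⟨p, -, rfl⟩ := List.mem_map.1 hx
  exact letter_mem_or_inv_mem Γ p.1 p.2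

/-- A word is geodesic if no shorter word represents the same element of `A_Γ`. -/
def IsGeodesic (Γ : SimpleGraph V) (w : List (V × Bool)) : Prop :=
  ∀ ⦃w'⦄, wordProd Γ w' = wordProd Γ w → w.length ≤ w'.length

theorem isGeodesic_of_length_eq {g : RAAG Γ} (hg : wordProd Γ w = g)
    (hl : w.length = wordLength Γ g) : IsGeodesic Γ w := by
  intro w' hw'
  rw [hl, ← hg, ← hw']
  exact wordLength_wordProd_le_length Γ w'

theorem IsGeodesic.of_cons (h : IsGeodesic Γ (a :: w)) : IsGeodesic Γ w := by
  intro w' hw'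
  have hcons : wordProd Γ (a :: w') = wordProd Γ (a :: w) := by
    rw [wordProd_cons, wordProd_cons, hw']
  exact Nat.le_of_succ_le_succ (h hcons)

theorem IsGeodesic.mk_notMem_range_cons_invLetter (h : IsGeodesic Γ (a :: w)) :
    mk (letterGraph Γ) w ∉ Set.range (cons (invLetter a)) := by
  rintro ⟨s, hs⟩
  obtain ⟨x, rfl⟩ := mk_surjective s
  have hw : TraceEquiv (letterGraph Γ) w (invLetter a :: x) := mk_eq_mk.1 hs.symm
  have hx : wordProd Γ x = wordProd Γ (a :: w) := by
    rw [wordProd_cons, wordProd_eq_of_traceEquiv hw, wordProd_cons, ← mul_assoc,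
      letter_mul_letter_invLetter, one_mul]
  have hlen : w.length = x.length + 1 := hw.perm.length_eq
  have hle : w.length + 1 ≤ x.length := h hx
  lia

theorem IsGeodesic.normalForm_wordProd (h : IsGeodesic Γ w) :
    normalForm (wordProd Γ w) = mk _ w := by
  induction w with
  | nil => exact normalForm_one
  | cons a w ih =>
    rw [wordProd_cons, normalForm_letter_mul, ih h.of_cons,
      mulLetter_of_notMem h.mk_notMem_range_cons_invLetter, cons_mk]

theorem IsGeodesic.traceEquiv (h₁ : IsGeodesic Γ w₁) (h₂ : IsGeodesic Γ w₂)
    (h : wordProd Γ w₁ = wordProd Γ w₂) : TraceEquiv (letterGraph Γ) w₁ w₂ := by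
  rw [← mk_eq_mk, ← h₁.normalForm_wordProd, ← h₂.normalForm_wordProd, h]

end RAAG

theorem raag_abs_well_defined_general {V : Type*} (Γ : SimpleGraph V)
    (g : RAAG Γ) (w₁ w₂ : List (V × Bool))
    (h₁ : (w₁.map fun p => RAAG.letter Γ p.1 p.2).prod = g)
    (h₂ : (w₂.map fun p => RAAG.letter Γ p.1 p.2).prod = g)
    (hl₁ : w₁.length = RAAG.wordLength Γ g)
    (hl₂ : w₂.length = RAAG.wordLength Γ g) :
    (w₁.map fun p => RAAG.gen Γ p.1).prod = (w₂.map fun p => RAAG.gen Γ p.1).prod := by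
  have hgeo₁ : RAAG.IsGeodesic Γ w₁ := RAAG.isGeodesic_of_length_eq h₁ hl₁
  have hgeo₂ : RAAG.IsGeodesic Γ w₂ := RAAG.isGeodesic_of_length_eq h₂ hl₂
  have htrace : TraceEquiv (RAAG.letterGraph Γ) w₁ w₂ := hgeo₁.traceEquiv hgeo₂ (h₁.trans h₂.symm)
  exact htrace.prod_map_eq fun _ _ hab => RAAG.gen_commute hab

theorem raag_abs_well_defined {V : Type*} [Fintype V] (Γ : SimpleGraph V)
    (g : RAAG Γ) (w₁ w₂ : List (V × Bool))
    (h₁ : (w₁.map fun p => RAAG.letter Γ p.1 p.2).prod = g)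
    (h₂ : (w₂.map fun p => RAAG.letter Γ p.1 p.2).prod = g)
    (hl₁ : w₁.length = RAAG.wordLength Γ g)
    (hl₂ : w₂.length = RAAG.wordLength Γ g) :
    (w₁.map fun p => RAAG.gen Γ p.1).prod = (w₂.map fun p => RAAG.gen Γ p.1).prod :=
  raag_abs_well_defined_general Γ g w₁ w₂ h₁ h₂ hl₁ hl₂
end

section
/- The absolute value map abs : A_Γ → A_Γ preserves adjacency: if g ∈ A_Γ, v ∈ V, e ∈ {+1, −1} and |g v^e| = |g| + 1, then abs(g v^e) = abs(g)·v. Consequently abs is 1-Lipschitz for the word metric: for all g₁, g₂ ∈ A_Γ, d(abs(g₁), abs(g₂)) ≤ d(g₁, g₂). -/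
/-!
A homomorphism to `{1, -1}` taking every generator to `-1` exists because the relators have even
length; it computes the parity of the word length, so multiplying `g` by a letter `v ^ e` changes
the length by exactly one. If the length goes up, appending `v ^ e` to a geodesic word for `g` gives
a geodesic word, and `abs (g * v ^ e) = abs g * v`. If it goes down, the same applies to
`g * v ^ e` and the inverse letter, so `abs (g * v ^ e) = abs g * v⁻¹`. In both cases
adjacent elements have adjacent images, which is the Lipschitz condition along a geodesic.
-/

section WordLength

variable {G : Type*} [Group G] {X : Set G}

lemma wlen_list_prod_le {l : List G} (hl : ∀ x ∈ l, x ∈ X ∨ x⁻¹ ∈ X) :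
    wlen X l.prod ≤ l.length :=
  Nat.sInf_le ⟨l, rfl, hl, rfl⟩

lemma wlen_le_one {x : G} (hx : x ∈ X ∨ x⁻¹ ∈ X) : wlen X x ≤ 1 := by
  simpa using wlen_list_prod_le (l := [x]) (by simpa using hx)

lemma exists_list_length_eq_wlen (hX : Subgroup.closure X = ⊤) (g : G) :
    ∃ l : List G, l.length = wlen X g ∧ (∀ x ∈ l, x ∈ X ∨ x⁻¹ ∈ X) ∧ l.prod = g := by
  have hg : g ∈ Submonoid.closure (X ∪ X⁻¹) := by
    rw [← Subgroup.closure_toSubmonoid, hX]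
    exact Subgroup.mem_top g
  obtain ⟨l, hl, hprod⟩ := Submonoid.exists_list_of_mem_closure hg
  have hne : {n | ∃ l : List G, l.length = n ∧ (∀ x ∈ l, x ∈ X ∨ x⁻¹ ∈ X) ∧ l.prod = g}.Nonempty :=
    ⟨l.length, l, rfl, hl, hprod⟩
  exact Nat.sInf_mem hne

lemma wlen_mul_le (hX : Subgroup.closure X = ⊤) (g h : G) :
    wlen X (g * h) ≤ wlen X g + wlen X h := by
  obtain ⟨l, hlen, hl, rfl⟩ := exists_list_length_eq_wlen hX g
  obtain ⟨m, hmlen, hm, rfl⟩ := exists_list_length_eq_wlen hX h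
  rw [← hlen, ← hmlen, ← List.prod_append, ← List.length_append]
  exact wlen_list_prod_le fun x hx => (List.mem_append.1 hx).elim (hl x) (hm x)

lemma map_eq_neg_one_of_mem_or_inv_mem {χ : G →* ℤˣ} (hχ : ∀ x ∈ X, χ x = -1) {x : G}
    (hx : x ∈ X ∨ x⁻¹ ∈ X) : χ x = -1 := by
  rcases hx with hx | hx
  · exact hχ x hx
  · simpa [inv_eq_iff_eq_inv] using hχ x⁻¹ hx

lemma map_eq_neg_one_pow_wlen (hX : Subgroup.closure X = ⊤) {χ : G →* ℤˣ}
    (hχ : ∀ x ∈ X, χ x = -1) (g : G) : χ g = (-1) ^ wlen X g := by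
  obtain ⟨l, hlen, hl, rfl⟩ := exists_list_length_eq_wlen hX g
  have hletter : ∀ x ∈ l, χ x = -1 := fun x hx => map_eq_neg_one_of_mem_or_inv_mem hχ (hl x hx)
  rw [← hlen, map_list_prod, List.prod_eq_pow_card (l.map χ) (-1) (by simpa using hletter),
    List.length_map]

lemma wlen_mul_ne (hX : Subgroup.closure X = ⊤) {χ : G →* ℤˣ} (hχ : ∀ x ∈ X, χ x = -1)
    (g : G) {x : G} (hx : x ∈ X ∨ x⁻¹ ∈ X) : wlen X (g * x) ≠ wlen X g := by
  intro heq
  have hχx : χ x = -1 := map_eq_neg_one_of_mem_or_inv_mem hχ hx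
  have hfix : χ g * χ x = χ g := by
    rw [← map_mul, map_eq_neg_one_pow_wlen hX hχ, heq, ← map_eq_neg_one_pow_wlen hX hχ]
  exact absurd (hχx.symm.trans (mul_eq_left.1 hfix)) (by decide)

lemma wlen_mul_eq_add_one_or (hX : Subgroup.closure X = ⊤) {χ : G →* ℤˣ}
    (hχ : ∀ x ∈ X, χ x = -1) (g : G) {x : G} (hx : x ∈ X ∨ x⁻¹ ∈ X) :
    wlen X (g * x) = wlen X g + 1 ∨ wlen X g = wlen X (g * x) + 1 := by
  have hne : wlen X (g * x) ≠ wlen X g := wlen_mul_ne hX hχ g hx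
  have hup : wlen X (g * x) ≤ wlen X g + 1 :=
    (wlen_mul_le hX g x).trans (Nat.add_le_add_left (wlen_le_one hx) _)
  have hdown : wlen X g ≤ wlen X (g * x) + 1 := by
    have hinv : wlen X x⁻¹ ≤ 1 := wlen_le_one (by simpa using hx.symm)
    simpa using (wlen_mul_le hX (g * x) x⁻¹).trans (Nat.add_le_add_left hinv _)
  omega

lemma wlen_inv_mul_map_le_of_forall_le_one {H : Type*} [Group H] {Y : Set H}
    (hX : Subgroup.closure X = ⊤) (hY : Subgroup.closure Y = ⊤) {f : G → H}
    (hf : ∀ g x : G, x ∈ X ∨ x⁻¹ ∈ X → wlen Y ((f g)⁻¹ * f (g * x)) ≤ 1) (g₁ g₂ : G) :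
    wlen Y ((f g₁)⁻¹ * f g₂) ≤ wlen X (g₁⁻¹ * g₂) := by
  have along_list (l : List G) (hl : ∀ x ∈ l, x ∈ X ∨ x⁻¹ ∈ X) (g : G) :
      wlen Y ((f g)⁻¹ * f (g * l.prod)) ≤ l.length := by
    induction l generalizing g with
    | nil => simpa using wlen_list_prod_le (X := Y) (l := []) (by simp)
    | cons x l ih =>
      rw [List.forall_mem_cons] at hl
      calc wlen Y ((f g)⁻¹ * f (g * (x :: l).prod))
          = wlen Y ((f g)⁻¹ * f (g * x) * ((f (g * x))⁻¹ * f (g * x * l.prod))) := by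
            rw [List.prod_cons, ← mul_assoc g x, mul_assoc (f g)⁻¹, mul_inv_cancel_left]
        _ ≤ 1 + l.length :=
            (wlen_mul_le hY _ _).trans (Nat.add_le_add (hf g x hl.1) (ih hl.2 (g * x)))
        _ = (x :: l).length := by rw [List.length_cons, Nat.add_comm]
  obtain ⟨l, hlen, hl, hprod⟩ := exists_list_length_eq_wlen hX (g₁⁻¹ * g₂)
  simpa [hprod, hlen] using along_list l hl g₁

end WordLength

section SignedWords

variable {G V : Type*} [Group G] {s : V → G}

/-- The letter `s v ^ e` attached to a family `s` of group elements, where `e = true` stands for the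
exponent `1` and `e = false` for the exponent `-1`; for `s = RAAG.gen Γ` this is `RAAG.letter Γ`. -/
def signedLetter (s : V → G) (v : V) (e : Bool) : G :=
  if e then s v else (s v)⁻¹

lemma signedLetter_not (v : V) (e : Bool) : signedLetter s v (!e) = (signedLetter s v e)⁻¹ := by
  cases e <;> simp [signedLetter]

lemma mem_range_or_inv_mem_range_iff {x : G} :
    x ∈ Set.range s ∨ x⁻¹ ∈ Set.range s ↔
      x ∈ Set.range fun p : V × Bool => signedLetter s p.1 p.2 := by
  constructor
  · rintro (⟨v, rfl⟩ | ⟨v, hv⟩)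
    · exact ⟨(v, true), rfl⟩
    · exact ⟨(v, false), inv_eq_iff_eq_inv.2 hv⟩
  · rintro ⟨⟨v, _ | _⟩, rfl⟩
    · exact Or.inr ⟨v, (inv_inv (s v)).symm⟩
    · exact Or.inl ⟨v, rfl⟩

lemma signedLetter_mem_range_or (v : V) (e : Bool) :
    signedLetter s v e ∈ Set.range s ∨ (signedLetter s v e)⁻¹ ∈ Set.range s :=
  mem_range_or_inv_mem_range_iff.2 ⟨(v, e), rfl⟩

lemma exists_geodesic_word (hs : Subgroup.closure (Set.range s) = ⊤) (g : G) :
    ∃ w : List (V × Bool), (w.map fun p => signedLetter s p.1 p.2).prod = g ∧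
      w.length = wlen (Set.range s) g := by
  obtain ⟨l, hlen, hl, rfl⟩ := exists_list_length_eq_wlen hs g
  obtain ⟨w, rfl⟩ : l ∈ Set.range (List.map fun p : V × Bool => signedLetter s p.1 p.2) := by
    rw [Set.range_list_map]
    exact fun x hx => mem_range_or_inv_mem_range_iff.1 (hl x hx)
  exact ⟨w, rfl, by rw [← hlen, List.length_map]⟩

/-- `abs` is the absolute value map of a group with respect to the generating family `s`: it sends
the element represented by a geodesic word to the element represented by the word with all exponents
made positive. That the result does not depend on the geodesic word is part of the condition. -/
def IsAbsMap (s : V → G) (abs : G → G) : Prop :=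
  ∀ (g : G) (w : List (V × Bool)), (w.map fun p => signedLetter s p.1 p.2).prod = g →
    w.length = wlen (Set.range s) g → abs g = (w.map fun p => s p.1).prod

namespace IsAbsMap

variable {abs : G → G}

lemma map_mul_signedLetter (habs : IsAbsMap s abs) (hs : Subgroup.closure (Set.range s) = ⊤)
    {g : G} {v : V} {e : Bool}
    (hlen : wlen (Set.range s) (g * signedLetter s v e) = wlen (Set.range s) g + 1) :
    abs (g * signedLetter s v e) = abs g * s v := by
  obtain ⟨w, hw, hwlen⟩ := exists_geodesic_word hs g
  rw [habs g w hw hwlen,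
    habs (g * signedLetter s v e) (w ++ [(v, e)]) (by simp [hw]) (by simp [hlen, hwlen])]
  simp

lemma exists_map_mul_signedLetter (habs : IsAbsMap s abs)
    (hs : Subgroup.closure (Set.range s) = ⊤) {χ : G →* ℤˣ} (hχ : ∀ v, χ (s v) = -1)
    (g : G) (v : V) (e : Bool) :
    ∃ e' : Bool, abs (g * signedLetter s v e) = abs g * signedLetter s v e' := by
  rcases wlen_mul_eq_add_one_or hs (Set.forall_mem_range.2 hχ) g (signedLetter_mem_range_or v e)
    with hup | hdown
  · exact ⟨true, habs.map_mul_signedLetter hs hup⟩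
  · have hback : g * signedLetter s v e * signedLetter s v (!e) = g := by
      rw [signedLetter_not, mul_inv_cancel_right]
    have habs_g : abs g = abs (g * signedLetter s v e) * s v := by
      conv_lhs => rw [← hback]
      exact habs.map_mul_signedLetter hs (by rwa [hback])
    exact ⟨false, eq_mul_inv_of_mul_eq habs_g.symm⟩

lemma wlen_inv_mul_map_mul_le_one (habs : IsAbsMap s abs)
    (hs : Subgroup.closure (Set.range s) = ⊤) {χ : G →* ℤˣ} (hχ : ∀ v, χ (s v) = -1)
    (g x : G) (hx : x ∈ Set.range s ∨ x⁻¹ ∈ Set.range s) :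
    wlen (Set.range s) ((abs g)⁻¹ * abs (g * x)) ≤ 1 := by
  obtain ⟨⟨v, e⟩, rfl⟩ := mem_range_or_inv_mem_range_iff.1 hx
  obtain ⟨e', he'⟩ := habs.exists_map_mul_signedLetter hs hχ g v e
  rw [he', inv_mul_cancel_left]
  exact wlen_le_one (signedLetter_mem_range_or v e')

end IsAbsMap

end SignedWords

namespace RAAG

variable {V : Type*} (Γ : SimpleGraph V)

lemma closure_range_gen : Subgroup.closure (Set.range (gen Γ)) = ⊤ :=
  PresentedGroup.closure_range_of (raagRels Γ)

/-- The homomorphism `A_Γ → {1, -1}` sending every generator to `-1`; its value at `g` is the parity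
of the word length of `g`. -/
def parity : RAAG Γ →* ℤˣ :=
  PresentedGroup.toGroup (f := fun _ => -1) (by rintro _ ⟨u, v, -, rfl⟩; simp)

lemma parity_gen (v : V) : parity Γ (gen Γ v) = -1 :=
  PresentedGroup.toGroup.of _

end RAAG

theorem raag_abs_preserves_adjacency_general {G V : Type*} [Group G] {s : V → G}
    (hs : Subgroup.closure (Set.range s) = ⊤) {χ : G →* ℤˣ} (hχ : ∀ v, χ (s v) = -1)
    {abs : G → G} (habs : IsAbsMap s abs) :
    (∀ (g : G) (v : V) (e : Bool),
      wlen (Set.range s) (g * signedLetter s v e) = wlen (Set.range s) g + 1 →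
      abs (g * signedLetter s v e) = abs g * s v) ∧
    (∀ g₁ g₂ : G,
      wlen (Set.range s) ((abs g₁)⁻¹ * abs g₂) ≤ wlen (Set.range s) (g₁⁻¹ * g₂)) :=
  ⟨fun _ _ _ => habs.map_mul_signedLetter hs,
    wlen_inv_mul_map_le_of_forall_le_one hs hs (habs.wlen_inv_mul_map_mul_le_one hs hχ)⟩

theorem raag_abs_preserves_adjacency {V : Type*} [Fintype V] (Γ : SimpleGraph V)
    (abs : RAAG Γ → RAAG Γ)
    (habs : ∀ (g : RAAG Γ) (w : List (V × Bool)),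
      (w.map fun p => RAAG.letter Γ p.1 p.2).prod = g →
      w.length = RAAG.wordLength Γ g →
      abs g = (w.map fun p => RAAG.gen Γ p.1).prod) :
    (∀ (g : RAAG Γ) (v : V) (e : Bool),
      RAAG.wordLength Γ (g * RAAG.letter Γ v e) = RAAG.wordLength Γ g + 1 →
      abs (g * RAAG.letter Γ v e) = abs g * RAAG.gen Γ v) ∧
    (∀ g₁ g₂ : RAAG Γ,
      RAAG.wordLength Γ ((abs g₁)⁻¹ * abs g₂) ≤ RAAG.wordLength Γ (g₁⁻¹ * g₂)) :=
  raag_abs_preserves_adjacency_general (RAAG.closure_range_gen Γ) (RAAG.parity_gen Γ) habs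
end
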